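/- Let p₁ ∈ G with CP(p₁) = (p, q) a good pair. Then no point of X ∪ G lies in the open axis-parallel rectangle with corners p and q. -/

import Mathlib

open Finset

attribute [local instance] Classical.propDecidable

/-- A point in the plane: first coordinate is the key, second is the time. -/
abbrev Pt : Type := ℤ × ℤ

/-- `r` lies in the closed axis-parallel rectangle with opposite corners `p` and `q`. -/
def inRect (p q r : Pt) : Prop :=
  min p.1 q.1 ≤ r.1 ∧ r.1 ≤ max p.1 q.1 ∧ min p.2 q.2 ≤ r.2 ∧ r.2 ≤ max p.2 q.2

/-- `r` lies in the open axis-parallel rectangle with opposite corners `p` and `q`. -/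
def inOpenRect (p q r : Pt) : Prop :=
  min p.1 q.1 < r.1 ∧ r.1 < max p.1 q.1 ∧ min p.2 q.2 < r.2 ∧ r.2 < max p.2 q.2

/-- `S` is an arborally satisfied set. -/
def ArbSat (S : Finset Pt) : Prop :=
  ∀ p ∈ S, ∀ q ∈ S, p.1 = q.1 ∨ p.2 = q.2 ∨ ∃ r ∈ S, r ≠ p ∧ r ≠ q ∧ inRect p q r

/-- `X` is the permutation point set `{(σ(t), t) : 1 ≤ t ≤ n}` of some permutation `σ` of
`{1, …, n}`. -/
def IsPermPointSet (n : ℕ) (X : Finset Pt) : Prop :=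
  ∃ σ : Equiv.Perm (Fin n),
    X = Finset.univ.image (fun t : Fin n => ((((σ t : ℕ) : ℤ) + 1, ((t : ℕ) : ℤ) + 1) : Pt))

/-- The points added by GREEDY at time `t`, given the point set `X` and the set `G` of points
added before time `t`: for the point `p` of `X` with time `t` and each point `q` of time `< t`
with a different key such that the rectangle spanned by `p` and `q` contains no other point of
time `< t`, the point `(key q, t)` is added. -/
noncomputable def greedyStep (X G : Finset Pt) (t : ℤ) : Finset Pt :=
  (X.filter (fun p => p.2 = t)).biUnion (fun p =>
    (((X ∪ G).filter (fun s => s.2 < t)).filter (fun q =>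
      q.1 ≠ p.1 ∧ ∀ r ∈ (X ∪ G).filter (fun s => s.2 < t), inRect p q r → r = q)).image
      (fun q => ((q.1, t) : Pt)))

/-- All points added by GREEDY while processing times `1, …, t`. -/
noncomputable def greedyUpTo (X : Finset Pt) : ℕ → Finset Pt
  | 0 => ∅
  | t + 1 => greedyUpTo X t ∪ greedyStep X (greedyUpTo X t) ((t : ℤ) + 1)

/-- The set `G` of points added by GREEDY over the whole execution on a permutation point set
`X` of size `n`. -/
noncomputable def greedyG (n : ℕ) (X : Finset Pt) : Finset Pt := greedyUpTo X n

/-- `OP r` is the point of `X` processed at the time at which `r` was added; for `r ∈ X`,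
`OP r = r`. -/
noncomputable def OP (X : Finset Pt) (r : Pt) : Pt :=
  ((X.filter (fun p => p.2 = r.2)).toList).headI

/-- The first point of `S` above `p`: the point of `S` with the same key as `p`, smaller time,
and the largest such time. -/
noncomputable def firstAbove (S : Finset Pt) (p : Pt) : Pt :=
  (p.1, (((S.filter (fun q => q.1 = p.1 ∧ q.2 < p.2)).image Prod.snd).max).unbotD 0)

/-- The pair `CP(p) = (OP(p), OP(q))` where `q` is the first point of `X ∪ G` above `p`. -/
noncomputable def CP (X G : Finset Pt) (p : Pt) : Pt × Pt :=
  (OP X p, OP X (firstAbove (X ∪ G) p))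

/-- `CP(p) ∈ MMC` (*zig*). -/
def inMMC (X G : Finset Pt) (p : Pt) : Prop :=
  ((CP X G p).1.1 < p.1 ∧ (CP X G p).2.1 < (CP X G p).1.1 ∧ (CP X G p).2.2 < (CP X G p).1.2)
  ∨ (p.1 < (CP X G p).1.1 ∧ (CP X G p).1.1 < (CP X G p).2.1 ∧ (CP X G p).2.2 < (CP X G p).1.2)

/-- `CP(p) ∈ MFC` (*zag*). -/
def inMFC (X G : Finset Pt) (p : Pt) : Prop :=
  ((CP X G p).1.1 < p.1 ∧ p.1 ≤ (CP X G p).2.1 ∧ (CP X G p).2.2 < p.2)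
  ∨ (p.1 < (CP X G p).1.1 ∧ (CP X G p).2.1 ≤ p.1 ∧ (CP X G p).2.2 < p.2)

/-- A pair is good if no point of `X` lies in the open rectangle spanned by it. -/
def IsGoodPair (X : Finset Pt) (pr : Pt × Pt) : Prop :=
  ∀ r ∈ X, ¬ inOpenRect pr.1 pr.2 r

/-- `B` is a block of `X`: the set of points of `X` whose times lie in some interval, whose
keys form a set of consecutive integers; blocks are nonempty. -/
def IsBlock (X B : Finset Pt) : Prop :=
  B.Nonempty ∧ (∃ i j : ℤ, B = X.filter (fun p => i ≤ p.2 ∧ p.2 ≤ j)) ∧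
    ∃ c d : ℤ, B.image Prod.fst = Finset.Icc c d

/-- `Top(B)`: the point of `B` with the smallest time. -/
noncomputable def TopPt (B : Finset Pt) : Pt :=
  ((B.filter (fun p => ∀ q ∈ B, p.2 ≤ q.2)).toList).headI

/-- A decomposition tree of `X`: a rooted tree whose nodes are blocks of `X`, whose root is
`X`, whose leaves are exactly the singleton blocks, and in which the children of every
internal node partition it. -/
structure DecompTree (X : Finset Pt) where
  nodes : Finset (Finset Pt)
  parent : Finset Pt → Finset Pt
  isBlock_nodes : ∀ B ∈ nodes, IsBlock X B
  root_mem : X ∈ nodes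
  parent_mem : ∀ B ∈ nodes, B ≠ X → parent B ∈ nodes
  ssubset_parent : ∀ B ∈ nodes, B ≠ X → B ⊂ parent B
  leaf_iff : ∀ B ∈ nodes, (¬ ∃ C ∈ nodes, C ≠ X ∧ parent C = B) ↔ B.card = 1
  children_partition : ∀ B ∈ nodes, B.card ≠ 1 →
    ∀ x ∈ B, ∃! C, C ∈ nodes ∧ C ≠ X ∧ parent C = B ∧ x ∈ C

/-- The children of a node `B` in a decomposition tree. -/
noncomputable def DecompTree.children {X : Finset Pt} (T : DecompTree X) (B : Finset Pt) :
    Finset (Finset Pt) :=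
  T.nodes.filter (fun C => C ≠ X ∧ T.parent C = B)

/-- `X` is `k`-decomposable: it admits a decomposition tree in which every node has at most
`k` children. -/
def kDecomposable (k : ℕ) (X : Finset Pt) : Prop :=
  ∃ T : DecompTree X, ∀ B ∈ T.nodes, (T.children B).card ≤ k

/-- `RT(p)`: the node of the decomposition tree closest to the root (i.e. containing all
others) among the nodes `B` with `Top(B) = p`. -/
noncomputable def RT {X : Finset Pt} (T : DecompTree X) (p : Pt) : Finset Pt :=
  (((T.nodes.filter (fun B => TopPt B = p)).filter
      (fun B => ∀ C ∈ T.nodes, TopPt C = p → C ⊆ B)).toList).headI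

/-- The points added by GREEDY (`G`) while processing `Top(B)` that lie to the left of
`Top(B)`. -/
noncomputable def leftSet (G B : Finset Pt) : Finset Pt :=
  G.filter (fun s => s.2 = (TopPt B).2 ∧ s.1 < (TopPt B).1)

/-- `Left(B)`: among the points added by GREEDY while processing `Top(B)` with key less than
`key (Top B)`, the one with the largest key (junk if none exists). -/
noncomputable def leftPt (G B : Finset Pt) : Pt :=
  (((leftSet G B).filter (fun s => ∀ r ∈ leftSet G B, r.1 ≤ s.1)).toList).headI

/-- The points added by GREEDY (`G`) while processing `Top(B)` that lie to the right of
`Top(B)`. -/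
noncomputable def rightSet (G B : Finset Pt) : Finset Pt :=
  G.filter (fun s => s.2 = (TopPt B).2 ∧ (TopPt B).1 < s.1)

/-- `Right(B)`: among the points added by GREEDY while processing `Top(B)` with key greater
than `key (Top B)`, the one with the smallest key (junk if none exists). -/
noncomputable def rightPt (G B : Finset Pt) : Pt :=
  (((rightSet G B).filter (fun s => ∀ r ∈ rightSet G B, s.1 ≤ r.1)).toList).headI

/-!
Call `q` *visible* from `p` if the rectangle they span contains no other point earlier than `p`.
GREEDY adds to the row of `p` a point at the key of each visible `q`, so every `r ∈ G` comes with
some `y ∈ X` in its row and a point `w` visible from `y` in its column.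

Let `f` be the point visible from `p` in the column of `p₁`; it lies in the row of `q` and its key
is between those of `p` and `q`. Suppose `r` is in the open rectangle of `p` and `q`. Its key lies
strictly between those of `f` and `q`, since the rectangle of `p` and `f` is empty. As the pair is
good, `r` was added for some `y ∈ X` whose key is outside the rectangle, so the walk along the row
from `r` to `y` passes the key of `f` or of `q`. If `w` were no later than `q`, the rectangle of `y`
and `w` would contain that point. Hence `w` is again inside, and it is earlier than `r`: an infinite
descent.
-/

theorem firstAbove_eq_of_forall_snd_le {S : Finset Pt} {r w : Pt} (hw : w ∈ S)
    (hwr : w.1 = r.1) (hlt : w.2 < r.2) (hmax : ∀ s ∈ S, s.1 = r.1 → s.2 < r.2 → s.2 ≤ w.2) :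
    firstAbove S r = w := by
  have hmax_eq : ((S.filter (fun s => s.1 = r.1 ∧ s.2 < r.2)).image Prod.snd).max =
      (w.2 : WithBot ℤ) := by
    refine le_antisymm (Finset.max_le fun t ht => WithBot.coe_le_coe.2 ?_)
      (le_max (mem_image_of_mem _ (mem_filter.2 ⟨hw, hwr, hlt⟩)))
    obtain ⟨s, hs, rfl⟩ := mem_image.1 ht
    obtain ⟨hsS, hsr, hst⟩ := mem_filter.1 hs
    exact hmax s hsS hsr hst
  rw [firstAbove, hmax_eq, ← hwr]
  rfl

/-- `q` is visible from `p` in `S`: the condition on an earlier point `q` under which GREEDY, with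
`S` as the set of points present, adds a point with the key of `q` when it processes `p`. The
point `p` itself may or may not be in `S`. -/
structure GreedyVisible (S : Finset Pt) (p q : Pt) : Prop where
  mem : q ∈ S
  snd_lt : q.2 < p.2
  fst_ne : q.1 ≠ p.1
  eq_of_inRect : ∀ s ∈ S, s.2 < p.2 → inRect p q s → s = q

namespace GreedyVisible

variable {S T : Finset Pt} {p q r y f w : Pt}

theorem of_subset (h : GreedyVisible S p q) (hST : S ⊆ T) (hTS : ∀ s ∈ T, s.2 < p.2 → s ∈ S) :
    GreedyVisible T p q where
  mem := hST h.mem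
  snd_lt := h.snd_lt
  fst_ne := h.fst_ne
  eq_of_inRect s hs hsp := h.eq_of_inRect s (hTS s hs hsp) hsp

theorem firstAbove_eq (h : GreedyVisible S p w) (hpr : p.2 = r.2) (hwr : w.1 = r.1) :
    firstAbove S r = w := by
  refine firstAbove_eq_of_forall_snd_le h.mem hwr (hpr ▸ h.snd_lt) fun s hs hsr hst => ?_
  by_contra! hws
  have hsw : s = w := h.eq_of_inRect s hs (by omega) (by unfold inRect; omega)
  exact hws.ne (congrArg Prod.snd hsw.symm)

theorem fst_mem_uIoo_of_inOpenRect (hpf : GreedyVisible S p f) (hfq : f.2 = q.2)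
    (hf : f.1 ∈ Set.uIcc p.1 q.1) (hrS : r ∈ S) (hr : inOpenRect p q r) :
    r.1 ∈ Set.uIoo f.1 q.1 := by
  have hfp := hpf.snd_lt
  rw [Set.mem_uIcc] at hf
  unfold inOpenRect at hr
  have hrf : ¬ inRect p f r := fun hin => by
    have hrf : r = f := hpf.eq_of_inRect r hrS (by omega) hin
    have : r.2 = f.2 := congrArg Prod.snd hrf
    omega
  unfold inRect at hrf
  rw [Set.uIoo, Set.mem_Ioo]
  omega

theorem inOpenRect_of_fst_eq (hpf : GreedyVisible S p f) (hyw : GreedyVisible S y w)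
    (hqS : q ∈ S) (hfq : f.2 = q.2) (hf : f.1 ∈ Set.uIcc p.1 q.1) (hrS : r ∈ S)
    (hr : inOpenRect p q r) (hyr : y.2 = r.2) (hwr : w.1 = r.1) (hy : ¬ inOpenRect p q y) :
    inOpenRect p q w := by
  obtain ⟨hfqr, hrfq⟩ : r.1 ∈ Set.uIoo f.1 q.1 := hpf.fst_mem_uIoo_of_inOpenRect hfq hf hrS hr
  have hfp := hpf.snd_lt
  have hwy := hyw.snd_lt
  rw [Set.mem_uIcc] at hf
  unfold inOpenRect at hr hy ⊢
  by_contra hw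
  have hwq : w.2 ≤ q.2 := by omega
  have not_crossed : ∀ s ∈ S, s.2 = q.2 → s.1 ≠ r.1 → s.1 ∉ Set.uIcc y.1 r.1 := by
    intro s hs hsq hsr hsyr
    rw [Set.mem_uIcc] at hsyr
    have hsw : s = w := hyw.eq_of_inRect s hs (by omega) (by unfold inRect; omega)
    exact hsr (hsw ▸ hwr)
  have crossed : f.1 ∈ Set.uIcc y.1 r.1 ∨ q.1 ∈ Set.uIcc y.1 r.1 := by
    rw [Set.mem_uIcc, Set.mem_uIcc]
    omega
  rcases crossed with hfyr | hqyr
  · exact not_crossed f hpf.mem hfq (by omega) hfyr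
  · exact not_crossed q hqS rfl (by omega) hqyr

end GreedyVisible

section Greedy

variable {X G : Finset Pt} {n : ℕ} {r x : Pt}

theorem mem_greedyStep {t : ℤ} :
    r ∈ greedyStep X G t ↔
      ∃ p ∈ X, ∃ q, GreedyVisible (X ∪ G) p q ∧ p.2 = t ∧ r = (q.1, t) := by
  simp only [greedyStep, mem_biUnion, mem_image, mem_filter]
  constructor
  · rintro ⟨p, ⟨hp, rfl⟩, q, ⟨⟨hq, hqp⟩, hne, hempty⟩, rfl⟩
    exact ⟨p, hp, q, ⟨hq, hqp, hne, fun s hs hsp => hempty s ⟨hs, hsp⟩⟩, rfl, rfl⟩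
  · rintro ⟨p, hp, q, h, rfl, rfl⟩
    exact ⟨p, ⟨hp, rfl⟩, q, ⟨⟨h.mem, h.snd_lt⟩, h.fst_ne,
      fun s hs => h.eq_of_inRect s hs.1 hs.2⟩, rfl⟩

theorem mem_greedyUpTo :
    r ∈ greedyUpTo X n ↔ ∃ t < n, r ∈ greedyStep X (greedyUpTo X t) ((t : ℤ) + 1) := by
  induction n with
  | zero => simp [greedyUpTo]
  | succ n ih => simp only [greedyUpTo, mem_union, ih, Nat.lt_succ_iff_lt_or_eq, or_and_right,
      exists_or, exists_eq_left]

theorem greedyUpTo_mono (X : Finset Pt) : Monotone (greedyUpTo X) :=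
  monotone_nat_of_le_succ fun _ => subset_union_left

theorem mem_greedyUpTo_of_snd_le {m t : ℕ} (hr : r ∈ greedyUpTo X m) (ht : r.2 ≤ t) :
    r ∈ greedyUpTo X t := by
  obtain ⟨k, -, hk⟩ := mem_greedyUpTo.1 hr
  obtain ⟨_, _, _, _, _, hrk⟩ := mem_greedyStep.1 hk
  have hrt : r.2 = k + 1 := congrArg Prod.snd hrk
  exact mem_greedyUpTo.2 ⟨k, by omega, hk⟩

theorem exists_greedyVisible_of_mem_greedyG (hr : r ∈ greedyG n X) :
    ∃ p ∈ X, ∃ q, GreedyVisible (X ∪ greedyG n X) p q ∧ p.2 = r.2 ∧ q.1 = r.1 := by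
  obtain ⟨t, htn, hrt⟩ := mem_greedyUpTo.1 hr
  obtain ⟨p, hp, q, hpq, hpt, rfl⟩ := mem_greedyStep.1 hrt
  refine ⟨p, hp, q, hpq.of_subset (union_subset_union_right (greedyUpTo_mono X htn.le)) ?_,
    hpt, rfl⟩
  intro s hs hsp
  exact mem_union.2 ((mem_union.1 hs).imp_right fun hsG => mem_greedyUpTo_of_snd_le hsG (by omega))

theorem exists_snd_eq_of_mem_union_greedyG (hr : r ∈ X ∪ greedyG n X) : ∃ x ∈ X, x.2 = r.2 := by
  rcases mem_union.1 hr with hrX | hrG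
  · exact ⟨r, hrX, rfl⟩
  · obtain ⟨p, hp, -, -, hpr, -⟩ := exists_greedyVisible_of_mem_greedyG hrG
    exact ⟨p, hp, hpr⟩

theorem OP_mem_filter (h : ∃ x ∈ X, x.2 = r.2) : OP X r ∈ X.filter (fun x => x.2 = r.2) := by
  have hne : (X.filter (fun x => x.2 = r.2)).toList ≠ [] := by
    simpa [Finset.filter_eq_empty_iff] using h
  obtain ⟨a, l, hl⟩ := List.exists_cons_of_ne_nil hne
  rw [← mem_toList, OP, hl]
  exact List.mem_cons_self

theorem OP_eq (hX : Set.InjOn Prod.snd (X : Set Pt)) (hx : x ∈ X) (hxr : x.2 = r.2) :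
    OP X r = x := by
  obtain ⟨hmem, hsnd⟩ := mem_filter.1 (OP_mem_filter ⟨x, hx, hxr⟩)
  exact hX hmem hx (hsnd.trans hxr.symm)

theorem greedyVisible_OP_firstAbove (hX : Set.InjOn Prod.snd (X : Set Pt)) (hr : r ∈ greedyG n X) :
    GreedyVisible (X ∪ greedyG n X) (OP X r) (firstAbove (X ∪ greedyG n X) r) := by
  obtain ⟨p, hp, q, hpq, hpr, hqr⟩ := exists_greedyVisible_of_mem_greedyG hr
  rwa [OP_eq hX hp hpr, hpq.firstAbove_eq hpr hqr]

theorem inMFC.fst_mem_uIcc (h : inMFC X G r) :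
    r.1 ∈ Set.uIcc (CP X G r).1.1 (CP X G r).2.1 :=
  Set.mem_uIcc.2 (h.imp (fun h => ⟨h.1.le, h.2.1⟩) fun h => ⟨h.2.1, h.1.le⟩)

theorem IsPermPointSet.injOn_snd (hX : IsPermPointSet n X) :
    Set.InjOn Prod.snd (X : Set Pt) := by
  obtain ⟨σ, rfl⟩ := hX
  rw [coe_image, coe_univ, Set.image_univ]
  rintro _ ⟨a, rfl⟩ _ ⟨b, rfl⟩ hab
  have : a = b := Fin.ext (by simpa using hab)
  rw [this]

theorem good_pair_empty_interior_general {p₁ p q : Pt} (hX : Set.InjOn Prod.snd (X : Set Pt))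
    (hp₁ : p₁ ∈ greedyG n X) (hCP : CP X (greedyG n X) p₁ = (p, q))
    (hMFC : inMFC X (greedyG n X) p₁) (hGood : IsGoodPair X (p, q)) :
    ∀ r ∈ X ∪ greedyG n X, ¬ inOpenRect p q r := by
  have hf : p₁.1 ∈ Set.uIcc p.1 q.1 := by simpa only [hCP] using hMFC.fst_mem_uIcc
  obtain ⟨rfl, rfl⟩ := Prod.mk.inj hCP
  set S := X ∪ greedyG n X
  set p := OP X p₁
  set q := OP X (firstAbove S p₁)
  have hpf : GreedyVisible S p (firstAbove S p₁) := greedyVisible_OP_firstAbove hX hp₁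
  obtain ⟨hqX, hqf⟩ := mem_filter.1
    (OP_mem_filter (exists_snd_eq_of_mem_union_greedyG hpf.mem))
  intro r₀ hr₀S hr₀
  obtain ⟨r, hr, hearliest⟩ := (S.filter (inOpenRect p q)).exists_min_image Prod.snd
    ⟨r₀, mem_filter.2 ⟨hr₀S, hr₀⟩⟩
  obtain ⟨hrS, hrpq⟩ := mem_filter.1 hr
  have hrG : r ∈ greedyG n X := (mem_union.1 hrS).resolve_left fun hrX => hGood r hrX hrpq
  obtain ⟨y, hyX, w, hyw, hyr, hwr⟩ := exists_greedyVisible_of_mem_greedyG hrG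
  have hw : inOpenRect p q w := hpf.inOpenRect_of_fst_eq hyw (mem_union_left _ hqX)
    hqf.symm hf hrS hrpq hyr hwr (hGood y hyX)
  exact (hearliest w (mem_filter.2 ⟨hyw.mem, hw⟩)).not_gt (hyr ▸ hyw.snd_lt)

end Greedy

/-- Let `p₁ ∈ G` with `CP(p₁) = (p, q)` a good pair (of `MFC`). Then no
point of `X ∪ G` lies in the open axis-parallel rectangle with corners `p` and `q`. -/
theorem good_pair_empty_interior (n : ℕ) (X : Finset Pt) (hX : IsPermPointSet n X)
    (p₁ p q : Pt) (hp₁ : p₁ ∈ greedyG n X)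
    (hCP : CP X (greedyG n X) p₁ = (p, q))
    (hMFC : inMFC X (greedyG n X) p₁)
    (hGood : IsGoodPair X (p, q)) :
    ∀ r ∈ X ∪ greedyG n X, ¬ inOpenRect p q r :=
  good_pair_empty_interior_general hX.injOn_snd hp₁ hCP hMFC hGood
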